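/- Assume 0 ≤ a11 < 1 and 0 < a22 < 1/T. If h(0) < 0, then the matrix M(0) is convergent to zero. -/

import Mathlib

open Filter

/-- A square matrix with nonnegative real entries is *convergent to zero* if its powers
tend to the zero matrix. -/
def ConvergentToZero {n : ℕ} (M : Matrix (Fin n) (Fin n) ℝ) : Prop :=
  Tendsto (fun k : ℕ => M ^ k) atTop (nhds 0)

/-- The matrix `M(θ)`: for `θ > 0` its rows are `(a11, a12 (e^{θT}-1)/θ)` and
`(a21, a22 (1-e^{-θT})/θ)`, while `M(0)` has rows `(a11, a12 T)` and `(a21, a22 T)`. -/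
noncomputable def Mmat (T a11 a12 a21 a22 θ : ℝ) : Matrix (Fin 2) (Fin 2) ℝ :=
  if θ = 0 then !![a11, a12 * T; a21, a22 * T]
  else !![a11, a12 * ((Real.exp (θ * T) - 1) / θ);
          a21, a22 * ((1 - Real.exp (-θ * T)) / θ)]

/-- The function `h(θ) = tr M(θ) - 1 - det M(θ)`, with
`h(0) = -(1-a11)(1-a22 T) + a12 a21 T`. -/
noncomputable def hfun (T a11 a12 a21 a22 θ : ℝ) : ℝ :=
  if θ = 0 then -(1 - a11) * (1 - a22 * T) + a12 * a21 * T
  else a11 + a22 * ((1 - Real.exp (-θ * T)) / θ) - 1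
    - a11 * a22 * ((1 - Real.exp (-θ * T)) / θ)
    + a12 * a21 * ((Real.exp (θ * T) - 1) / θ)

/-! `h(θ) = -det (1 - M(θ))`, so `h(0) < 0` and `a11 < 1` say that the leading principal minors of
`1 - M(0)` are positive. The positive vector `v = adj (1 - M(0)) (1, 1)` then satisfies
`v - M(0) v = det (1 - M(0)) (1, 1) > 0`. Hence `M(0) v ≤ r v` for some `r < 1`, and as `M(0)` is
nonnegative this iterates to `M(0)^k v ≤ r^k v`, which forces every entry of `M(0)^k` to zero. -/

open scoped Matrix Topology

section OrderedSemiring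

variable {ι R : Type*} [Fintype ι] [Semiring R] [PartialOrder R] [IsOrderedRing R]
  {M : Matrix ι ι R} {v w : ι → R}

theorem mulVec_le_mulVec_of_nonneg (hM : ∀ i j, 0 ≤ M i j) (h : v ≤ w) : M *ᵥ v ≤ M *ᵥ w :=
  fun i => dotProduct_le_dotProduct_of_nonneg_left h (hM i)

theorem apply_mul_le_mulVec (hM : ∀ i j, 0 ≤ M i j) (hv : 0 ≤ v) (i j : ι) :
    M i j * v j ≤ (M *ᵥ v) i :=
  Finset.single_le_sum (f := fun l => M i l * v l)
    (fun l _ => mul_nonneg (hM i l) (hv l)) (Finset.mem_univ j)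

end OrderedSemiring

theorem pow_mulVec_le_pow_smul {ι R : Type*} [Fintype ι] [DecidableEq ι] [CommSemiring R]
    [PartialOrder R] [IsOrderedRing R] {M : Matrix ι ι R} {v : ι → R} {r : R}
    (hM : ∀ i j, 0 ≤ M i j) (hr : 0 ≤ r) (h : M *ᵥ v ≤ r • v) (k : ℕ) :
    M ^ k *ᵥ v ≤ r ^ k • v := by
  induction k with
  | zero => simp
  | succ k ih =>
    calc M ^ (k + 1) *ᵥ v = M *ᵥ (M ^ k *ᵥ v) := by rw [pow_succ', Matrix.mulVec_mulVec]
      _ ≤ M *ᵥ (r ^ k • v) := mulVec_le_mulVec_of_nonneg hM ih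
      _ = r ^ k • (M *ᵥ v) := Matrix.mulVec_smul M (r ^ k) v
      _ ≤ r ^ k • (r • v) := fun i => mul_le_mul_of_nonneg_left (h i) (pow_nonneg hr k)
      _ = r ^ (k + 1) • v := by rw [smul_smul, pow_succ]

section OrderedField

variable {𝕜 : Type*} [Field 𝕜] [LinearOrder 𝕜] [IsStrictOrderedRing 𝕜]

theorem exists_lt_one_le_smul_of_forall_lt {ι : Type*} [Finite ι] {v w : ι → 𝕜}
    (hv : ∀ i, 0 < v i) (h : ∀ i, w i < v i) : ∃ r : 𝕜, 0 ≤ r ∧ r < 1 ∧ w ≤ r • v := by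
  have : Nonempty (Set.Iio (1 : 𝕜)) := ⟨0, zero_lt_one⟩
  obtain ⟨⟨s, hs⟩, hratio⟩ := Finite.exists_le fun i =>
    (⟨w i / v i, (div_lt_one (hv i)).2 (h i)⟩ : Set.Iio (1 : 𝕜))
  refine ⟨max s 0, le_max_right s 0, max_lt hs zero_lt_one, fun i => ?_⟩
  have hi : w i / v i ≤ s := hratio i
  exact (div_le_iff₀ (hv i)).1 (hi.trans (le_max_left s 0))

variable [Archimedean 𝕜] [TopologicalSpace 𝕜] [OrderTopology 𝕜]
  {ι : Type*} [Fintype ι] [DecidableEq ι] {M : Matrix ι ι 𝕜} {v : ι → 𝕜}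

theorem tendsto_pow_zero_of_mulVec_le_smul {r : 𝕜} (hM : ∀ i j, 0 ≤ M i j)
    (hv : ∀ i, 0 < v i) (hr₀ : 0 ≤ r) (hr₁ : r < 1) (h : M *ᵥ v ≤ r • v) :
    Tendsto (fun k : ℕ => M ^ k) atTop (𝓝 0) := by
  refine tendsto_pi_nhds.2 fun i => tendsto_pi_nhds.2 fun j => ?_
  have hnonneg (k : ℕ) : ∀ i j, 0 ≤ (M ^ k) i j := Matrix.pow_apply_nonneg hM k
  have hbound (k : ℕ) : (M ^ k) i j ≤ r ^ k * (v i / v j) := by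
    rw [← mul_div_assoc, le_div_iff₀ (hv j)]
    exact (apply_mul_le_mulVec (hnonneg k) (fun l => (hv l).le) i j).trans
      (pow_mulVec_le_pow_smul hM hr₀ h k i)
  have hgeom : Tendsto (fun k : ℕ => r ^ k * (v i / v j)) atTop (𝓝 0) := by
    simpa only [zero_mul] using
      (tendsto_pow_atTop_nhds_zero_of_lt_one hr₀ hr₁).mul_const (v i / v j)
  exact tendsto_of_tendsto_of_tendsto_of_le_of_le tendsto_const_nhds hgeom
    (fun k => hnonneg k i j) hbound

theorem tendsto_pow_zero_of_mulVec_lt (hM : ∀ i j, 0 ≤ M i j) (hv : ∀ i, 0 < v i)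
    (h : ∀ i, (M *ᵥ v) i < v i) : Tendsto (fun k : ℕ => M ^ k) atTop (𝓝 0) := by
  obtain ⟨r, hr₀, hr₁, hle⟩ := exists_lt_one_le_smul_of_forall_lt hv h
  exact tendsto_pow_zero_of_mulVec_le_smul hM hv hr₀ hr₁ hle

theorem tendsto_pow_zero_of_adjugate_one_sub_mulVec_pos (hM : ∀ i j, 0 ≤ M i j)
    (hdet : 0 < (1 - M).det) (hadj : ∀ i, 0 < ((1 - M).adjugate *ᵥ 1) i) :
    Tendsto (fun k : ℕ => M ^ k) atTop (𝓝 0) := by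
  set v : ι → 𝕜 := (1 - M).adjugate *ᵥ 1 with hv
  have hdefect : v - M *ᵥ v = (1 - M).det • 1 :=
    calc v - M *ᵥ v = (1 - M) *ᵥ v := by rw [Matrix.sub_mulVec, Matrix.one_mulVec]
      _ = (1 - M).det • 1 := by
        rw [hv, Matrix.mulVec_mulVec, Matrix.mul_adjugate, Matrix.smul_mulVec, Matrix.one_mulVec]
  refine tendsto_pow_zero_of_mulVec_lt hM hadj fun i => sub_pos.1 ?_
  have hdefect_i : v i - (M *ᵥ v) i = (1 - M).det := by simpa using congrFun hdefect i
  rwa [hdefect_i]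

theorem tendsto_pow_zero_of_det_one_sub_pos {M : Matrix (Fin 2) (Fin 2) 𝕜}
    (hM : ∀ i j, 0 ≤ M i j) (h₀₀ : M 0 0 < 1) (hdet : 0 < (1 - M).det) :
    Tendsto (fun k : ℕ => M ^ k) atTop (𝓝 0) := by
  have hdet_eq : (1 - M).det = (1 - M 0 0) * (1 - M 1 1) - M 0 1 * M 1 0 := by
    simp [Matrix.det_fin_two]
  have h₁₁ : M 1 1 < 1 := by
    have hoff : 0 ≤ M 0 1 * M 1 0 := mul_nonneg (hM 0 1) (hM 1 0)
    have hdiag : 0 < (1 - M 0 0) * (1 - M 1 1) := by linarith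
    exact sub_pos.1 (pos_of_mul_pos_right hdiag (sub_pos.2 h₀₀).le)
  have hadj : (1 - M).adjugate *ᵥ 1 = ![1 - M 1 1 + M 0 1, M 1 0 + (1 - M 0 0)] := by
    ext i
    fin_cases i <;> simp [Matrix.adjugate_fin_two, Matrix.mulVec, dotProduct]
  refine tendsto_pow_zero_of_adjugate_one_sub_mulVec_pos hM hdet ?_
  rw [hadj, Fin.forall_fin_two]
  exact ⟨add_pos_of_pos_of_nonneg (sub_pos.2 h₁₁) (hM 0 1),
    add_pos_of_nonneg_of_pos (hM 1 0) (sub_pos.2 h₀₀)⟩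

end OrderedField

theorem Mmat_zero (T a11 a12 a21 a22 : ℝ) :
    Mmat T a11 a12 a21 a22 0 = !![a11, a12 * T; a21, a22 * T] :=
  if_pos rfl

theorem hfun_eq_neg_det_one_sub_Mmat (T a11 a12 a21 a22 θ : ℝ) :
    hfun T a11 a12 a21 a22 θ = -(1 - Mmat T a11 a12 a21 a22 θ).det := by
  unfold hfun Mmat
  split_ifs <;> simp [Matrix.det_fin_two] <;> ring

/-- If `0 ≤ a11 < 1`, `0 < a22 < 1/T` and `h(0) < 0`, then `M(0)` is
convergent to zero. -/
theorem mmat_zero_convergentToZero (T a11 a12 a21 a22 : ℝ)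
    (hT : 0 < T) (h11 : 0 ≤ a11) (h12 : 0 ≤ a12) (h21 : 0 ≤ a21)
    (h11lt : a11 < 1) (h22pos : 0 < a22) (h22lt : a22 < 1 / T)
    (h0 : hfun T a11 a12 a21 a22 0 < 0) :
    ConvergentToZero (Mmat T a11 a12 a21 a22 0) := by
  have hM : ∀ i j, 0 ≤ Mmat T a11 a12 a21 a22 0 i j := by
    simp only [Mmat_zero, Fin.forall_fin_two]
    exact ⟨⟨h11, mul_nonneg h12 hT.le⟩, h21, mul_nonneg h22pos.le hT.le⟩
  have h₀₀ : Mmat T a11 a12 a21 a22 0 0 0 < 1 := by simpa [Mmat_zero] using h11lt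
  have hdet : 0 < (1 - Mmat T a11 a12 a21 a22 0).det := by
    rwa [hfun_eq_neg_det_one_sub_Mmat, neg_lt_zero] at h0
  exact tendsto_pow_zero_of_det_one_sub_pos hM h₀₀ hdet
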